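/- (Fourier expansion of double Eisenstein series) For integers s1 ≥ 3 and s2 ≥ 2 and every τ in the upper half-plane ℍ: G_{s1,s2}(τ) = ζ(s1,s2) + ζ(s2)·g_{s1}(τ) + ∑_{k1+k2 = s1+s2, k1 ≥ 2, k2 ≥ 2} C^{k2}_{s1,s2}·ζ(k2)·g_{k1}(τ) + g_{s1,s2}(τ), where C^{k}_{n1,n2} := (−1)^{n2}·binom(k−1, n2−1) + (−1)^{k−n1}·binom(k−1, n1−1). -/

import Mathlib

open Finset Complex

/-- A lattice point `mτ + n`, encoded as `(m, n) ∈ ℤ × ℤ`, is positive iff `m > 0`, or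
`m = 0` and `n > 0`. -/
def posLattice (p : ℤ × ℤ) : Prop := 0 < p.1 ∨ (p.1 = 0 ∧ 0 < p.2)

/-- The double Eisenstein series `G_{s₁,s₂}(τ) = ∑_{λ₁≻λ₂≻0} 1/(λ₁^{s₁} λ₂^{s₂})`, where the
sum runs over pairs of lattice points `λᵢ = mᵢτ + nᵢ` with `λ₁ − λ₂` and `λ₂` positive. -/
noncomputable def G2 (s1 s2 : ℕ) (τ : ℂ) : ℂ :=
  ∑' x : {x : (ℤ × ℤ) × (ℤ × ℤ) // posLattice (x.1 - x.2) ∧ posLattice x.2},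
    1 / (((x.1.1.1 : ℂ) * τ + (x.1.1.2 : ℂ)) ^ s1 * ((x.1.2.1 : ℂ) * τ + (x.1.2.2 : ℂ)) ^ s2)

/-- The Riemann zeta value `ζ(k) = ∑_{n>0} 1/n^k` as a real number. -/
noncomputable def rzeta (k : ℕ) : ℝ := ∑' n : ℕ, (1 : ℝ) / ((n : ℝ) + 1) ^ k

/-- The double zeta value `ζ(a,b) = ∑_{n₁>n₂>0} 1/(n₁^a n₂^b)` as a real number. -/
noncomputable def mzeta2 (a b : ℕ) : ℝ :=
  ∑' p : {p : ℕ × ℕ // p.2 < p.1 ∧ 0 < p.2},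
    (1 : ℝ) / ((p.1.1 : ℝ) ^ a * (p.1.2 : ℝ) ^ b)

/-- `q = e^{2πiτ}`. -/
noncomputable def qExp (τ : ℂ) : ℂ := Complex.exp (2 * Real.pi * Complex.I * τ)

/-- `g_k(τ) = (−2πi)^k ∑_{u>0, v>0} (v^{k−1}/(k−1)!)·q^{uv}`. -/
noncomputable def gOne (k : ℕ) (τ : ℂ) : ℂ :=
  (-(2 * Real.pi * Complex.I)) ^ k *
    ∑' uv : ℕ × ℕ, (((uv.2 + 1 : ℕ) : ℂ) ^ (k - 1) / ((k - 1).factorial : ℂ)) *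
      qExp τ ^ ((uv.1 + 1) * (uv.2 + 1))

/-- `g_{s₁,s₂}(τ) = (−2πi)^{s₁+s₂} ∑_{u₁>u₂>0, v₁,v₂>0}
(v₁^{s₁−1} v₂^{s₂−1}/((s₁−1)!(s₂−1)!))·q^{u₁v₁+u₂v₂}`. -/
noncomputable def gTwo (s1 s2 : ℕ) (τ : ℂ) : ℂ :=
  (-(2 * Real.pi * Complex.I)) ^ (s1 + s2) *
    ∑' x : {x : (ℕ × ℕ) × (ℕ × ℕ) // x.1.2 < x.1.1 ∧ 0 < x.1.2},
      (((x.1.2.1 + 1 : ℕ) : ℂ) ^ (s1 - 1) * ((x.1.2.2 + 1 : ℕ) : ℂ) ^ (s2 - 1) /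
        (((s1 - 1).factorial : ℂ) * ((s2 - 1).factorial : ℂ))) *
        qExp τ ^ (x.1.1.1 * (x.1.2.1 + 1) + x.1.1.2 * (x.1.2.2 + 1))

/-- `C^k_{n₁,n₂} = (−1)^{n₂}·binom(k−1, n₂−1) + (−1)^{k−n₁}·binom(k−1, n₁−1)`. -/
noncomputable def Ccoef (k n1 n2 : ℕ) : ℂ :=
  (-1 : ℂ) ^ n2 * ((k - 1).choose (n2 - 1) : ℂ) +
    (-1 : ℂ) ^ ((k : ℤ) - (n1 : ℤ)) * ((k - 1).choose (n1 - 1) : ℂ)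

/-!
Write `λᵢ = mᵢτ + nᵢ` and `Ψ_k(x) = ∑_{n ∈ ℤ} 1/(x+n)^k`. The pairs `λ₁ ≻ λ₂ ≻ 0` split into four
families. Those with `m₁ = m₂ = 0` give the double zeta value. Those with `m₁ > m₂ = 0` give
`ζ(s₂) ∑_{m>0} Ψ_{s₁}(mτ)`, and those with `m₁ > m₂ > 0` give `∑ Ψ_{s₁}(m₁τ) Ψ_{s₂}(m₂τ)`;
Lipschitz's formula (`hasSum_lipschitz`) turns these into `ζ(s₂) g_{s₁}` and `g_{s₁,s₂}`.

In the family `m₁ = m₂ = m > 0` put `d = n₁ - n₂ > 0` and decompose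
`1/((x+n+d)^{s₁} (x+n)^{s₂})`, with `x = mτ`, into partial fractions in `n` (`partialFrac`). The
residues of the two simple poles are opposite, so the simple poles telescope to zero when summed
over `n` (`hasSum_telescope`). The poles of order `k₁ ≥ 2` contribute
`C^{k₂} d^{-k₂} Ψ_{k₁}(mτ)` with `k₁ + k₂ = s₁ + s₂`, and summing over `m` and `d` yields
`C^{k₂} ζ(k₂) g_{k₁}`.

All rearrangements rest on absolute convergence (`summable_G2`). With `|λ| ≥ r max(|m|, |n|)` and
`0 ≤ m₂ ≤ m₁`, the general term is bounded by a constant times the product of the weights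
`max(1, |·|)^{-5/4}` of the four coordinates.
-/

/-! ### Partial fractions and sums over one row -/

/-- With `A = 1/a`, `B = 1/b`, `D = 1/(a - b)`, this is the partial fraction decomposition of
`1/(a^s b^t)`; the relation `A * B = D * (B - A)` drives a double induction. -/
lemma partialFrac {A B D : ℂ} (h : A * B = D * (B - A)) (s t : ℕ) (hst : s ≠ 0 ∨ t ≠ 0) :
    A ^ s * B ^ t =
      ∑ j ∈ range s, (-1) ^ t * (Nat.multichoose t j : ℂ) * D ^ (t + j) * A ^ (s - j) +
      ∑ j ∈ range t, (-1) ^ j * (Nat.multichoose s j : ℂ) * D ^ (s + j) * B ^ (t - j) := by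
  induction s generalizing t with
  | zero =>
    obtain ⟨t, rfl⟩ := Nat.exists_eq_succ_of_ne_zero (hst.resolve_left (by simp))
    rw [Finset.sum_range_succ' _ t]
    simp [Nat.multichoose_zero_succ]
  | succ s ihs =>
    induction t with
    | zero =>
      rw [Finset.sum_range_succ' _ s]
      simp [Nat.multichoose_zero_succ]
    | succ t iht =>
      have h1 := ihs (t + 1) (by simp)
      have h2 := iht (by simp)
      have e : A ^ (s + 1) * B ^ (t + 1) =
          D * (A ^ s * B ^ (t + 1) - A ^ (s + 1) * B ^ t) := by
        linear_combination (A ^ s * B ^ t) * h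
      rw [e, h1, h2]
      simp only [Finset.sum_range_succ' _ s, Finset.sum_range_succ' _ t,
        Nat.multichoose_succ_succ, Nat.multichoose_zero_right, mul_add, mul_sub,
        Finset.mul_sum]
      have e1 : ∑ i ∈ range s, (-1 : ℂ) ^ (t + 1) *
            ((Nat.multichoose t (i + 1) + Nat.multichoose (t + 1) i : ℕ) : ℂ) *
            D ^ (t + 1 + (i + 1)) * A ^ (s + 1 - (i + 1)) =
          ∑ i ∈ range s, D * ((-1 : ℂ) ^ (t + 1) * (Nat.multichoose (t + 1) i : ℂ) *
            D ^ (t + 1 + i) * A ^ (s - i)) -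
          ∑ i ∈ range s, D * ((-1 : ℂ) ^ t * (Nat.multichoose t (i + 1) : ℂ) *
            D ^ (t + (i + 1)) * A ^ (s + 1 - (i + 1))) := by
        rw [← Finset.sum_sub_distrib]
        refine Finset.sum_congr rfl fun i _ => ?_
        rw [Nat.add_sub_add_right]
        push_cast
        ring
      have e2 : ∑ i ∈ range t, (-1 : ℂ) ^ (i + 1) *
            ((Nat.multichoose s (i + 1) + Nat.multichoose (s + 1) i : ℕ) : ℂ) *
            D ^ (s + 1 + (i + 1)) * B ^ (t + 1 - (i + 1)) =
          ∑ i ∈ range t, D * ((-1 : ℂ) ^ (i + 1) * (Nat.multichoose s (i + 1) : ℂ) *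
            D ^ (s + (i + 1)) * B ^ (t + 1 - (i + 1))) -
          ∑ i ∈ range t, D * ((-1 : ℂ) ^ i * (Nat.multichoose (s + 1) i : ℂ) *
            D ^ (s + 1 + i) * B ^ (t - i)) := by
        rw [← Finset.sum_sub_distrib]
        refine Finset.sum_congr rfl fun i _ => ?_
        rw [Nat.add_sub_add_right]
        push_cast
        ring
      rw [e1, e2]
      simp only [Nat.sub_zero, Nat.add_zero, Nat.cast_one, pow_zero]
      ring

/-- The truncated ranges produced by partial fractions agree with the sum over
`k ∈ {2, …, s+t-2}`, since the extra binomial coefficients vanish. -/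
lemma coef_sum (s t : ℕ) (hs : 2 ≤ s) (ht : 2 ≤ t) (D : ℂ) (Ψ : ℕ → ℂ) :
    ∑ j ∈ range (s - 1), (-1) ^ t * (Nat.multichoose t j : ℂ) * D ^ (t + j) * Ψ (s - j) +
      ∑ j ∈ range (t - 1), (-1) ^ j * (Nat.multichoose s j : ℂ) * D ^ (s + j) * Ψ (t - j) =
    ∑ k ∈ Icc 2 (s + t - 2), Ccoef k s t * D ^ k * Ψ (s + t - k) := by
  have key : ∀ (p q : ℕ), 2 ≤ p → 2 ≤ q → ∀ (c : ℕ → ℂ),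
      ∑ j ∈ range (p - 1), c (q + j) * (Nat.multichoose q j : ℂ) * D ^ (q + j) * Ψ (p - j) =
      ∑ k ∈ Icc 2 (p + q - 2), c k * ((k - 1).choose (q - 1) : ℂ) * D ^ k * Ψ (p + q - k) := by
    intro p q hp hq c
    have e : ∑ j ∈ range (p - 1),
          c (q + j) * (Nat.multichoose q j : ℂ) * D ^ (q + j) * Ψ (p - j) =
        ∑ k ∈ Ico q (q + (p - 1)),
          c k * ((k - 1).choose (q - 1) : ℂ) * D ^ k * Ψ (p + q - k) := by
      rw [Finset.sum_Ico_eq_sum_range, Nat.add_sub_cancel_left]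
      refine Finset.sum_congr rfl fun j hj => ?_
      rw [Nat.multichoose_eq, show p + q - (q + j) = p - j by omega,
        ← Nat.choose_symm_of_eq_add (show q + j - 1 = (q - 1) + j by omega)]
    rw [e]
    refine Finset.sum_subset (fun k hk => ?_) fun k hk hk' => ?_
    · simp only [Finset.mem_Ico, Finset.mem_Icc] at *
      omega
    · simp only [Finset.mem_Ico, Finset.mem_Icc] at *
      rw [Nat.choose_eq_zero_of_lt (by omega)]
      simp
  have k1 := key s t hs ht (fun _ => (-1) ^ t)
  have k2 := key t s ht hs (fun k => (-1 : ℂ) ^ ((k : ℤ) - (s : ℤ)))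
  have e2 : ∑ j ∈ range (t - 1),
        (-1 : ℂ) ^ j * (Nat.multichoose s j : ℂ) * D ^ (s + j) * Ψ (t - j) =
      ∑ j ∈ range (t - 1), (-1 : ℂ) ^ (((s + j : ℕ) : ℤ) - (s : ℤ)) *
        (Nat.multichoose s j : ℂ) * D ^ (s + j) * Ψ (t - j) := by
    refine Finset.sum_congr rfl fun j _ => ?_
    rw [show ((s + j : ℕ) : ℤ) - (s : ℤ) = (j : ℤ) by push_cast; ring, zpow_natCast]
  rw [e2, k1, k2, Nat.add_comm t s, ← Finset.sum_add_distrib]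
  refine Finset.sum_congr rfl fun k _ => ?_
  rw [Ccoef]
  ring

/-- The Lipschitz sum `∑_{n ∈ ℤ} 1/(x+n)^k`. -/
noncomputable def lipschitzSum (k : ℕ) (x : ℂ) : ℂ := ∑' n : ℤ, 1 / (x + n) ^ k

lemma hasSum_lipschitzSum {k : ℕ} (hk : 2 ≤ k) (x : ℂ) :
    HasSum (fun n : ℤ => 1 / (x + n) ^ k) (lipschitzSum k x) := by
  have h := EisensteinSeries.linear_right_summable x 1 (k := k) (by exact_mod_cast hk)
  refine Summable.hasSum (h.congr fun n => ?_)
  simp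

lemma add_int_ne_zero {x : ℂ} (hx : 0 < x.im) (n : ℤ) : x + n ≠ 0 := by
  intro h
  have := congrArg Complex.im h
  simp at this
  exact hx.ne' this

/-- The simple poles contribute nothing: `∑_n (1/(x+n) - 1/(x+n+d))` telescopes to `0`. -/
lemma hasSum_telescope {x : ℂ} (hx : 0 < x.im) (d : ℕ) :
    HasSum (fun n : ℤ => 1 / (x + n) - 1 / (x + n + d)) 0 := by
  have h1 : HasSum (fun n : ℤ => 1 / (x + n) - 1 / (x + n + 1)) 0 := by
    let z : UpperHalfPlane := ⟨x, hx⟩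
    have hs := EisensteinSeries.summable_right_one_div_linear_sub_one_div_linear_succ z 1
    have h0 := EisensteinSeries.tsum_symmetricIco_linear_sub_linear_add_one_eq_zero z 1
    rw [tsum_eq_of_summable_unconditional hs] at h0
    have := hs.hasSum
    rw [h0] at this
    simpa [z] using this
  induction d with
  | zero => simp
  | succ d ih =>
    have h2 := (Equiv.addRight (d : ℤ)).hasSum_iff.mpr h1
    have h3 := ih.add h2
    rw [add_zero] at h3
    refine h3.congr_fun fun n => ?_
    simp only [Function.comp, Equiv.coe_addRight]
    push_cast
    ring

/-- Summation over `n` of the terms with `m₁ = m₂`, at fixed difference `d = n₁ - n₂`. -/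
lemma hasSum_row {x : ℂ} (hx : 0 < x.im) (s t : ℕ) (hs : 2 ≤ s) (ht : 2 ≤ t) (d : ℕ)
    (hd : d ≠ 0) :
    HasSum (fun n : ℤ => 1 / ((x + n + d) ^ s * (x + n) ^ t))
      (∑ k ∈ Icc 2 (s + t - 2), Ccoef k s t * (1 / (d : ℂ)) ^ k * lipschitzSum (s + t - k) x) := by
  rw [← coef_sum s t hs ht (1 / (d : ℂ)) fun k => lipschitzSum k x]
  obtain ⟨s, rfl⟩ : ∃ s', s = s' + 1 := ⟨s - 1, by omega⟩
  obtain ⟨t, rfl⟩ : ∃ t', t = t' + 1 := ⟨t - 1, by omega⟩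
  set D : ℂ := 1 / (d : ℂ) with hD
  have hd' : (d : ℂ) ≠ 0 := by exact_mod_cast hd
  have hA : HasSum (fun n : ℤ => ∑ j ∈ range (s + 1 - 1),
      (-1) ^ (t + 1) * (Nat.multichoose (t + 1) j : ℂ) * D ^ (t + 1 + j) *
        (1 / (x + n + d) ^ (s + 1 - j)))
      (∑ j ∈ range (s + 1 - 1), (-1) ^ (t + 1) * (Nat.multichoose (t + 1) j : ℂ) *
        D ^ (t + 1 + j) * lipschitzSum (s + 1 - j) x) := by
    refine hasSum_sum fun j hj => HasSum.mul_left _ ?_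
    have hj' := Finset.mem_range.mp hj
    have := (Equiv.addRight (d : ℤ)).hasSum_iff.mpr
      (hasSum_lipschitzSum (k := s + 1 - j) (by omega) x)
    refine this.congr_fun fun n => ?_
    simp only [Function.comp, Equiv.coe_addRight]
    push_cast
    ring
  have hB : HasSum (fun n : ℤ => ∑ j ∈ range (t + 1 - 1),
      (-1) ^ j * (Nat.multichoose (s + 1) j : ℂ) * D ^ (s + 1 + j) *
        (1 / (x + n) ^ (t + 1 - j)))
      (∑ j ∈ range (t + 1 - 1), (-1) ^ j * (Nat.multichoose (s + 1) j : ℂ) *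
        D ^ (s + 1 + j) * lipschitzSum (t + 1 - j) x) := by
    refine hasSum_sum fun j hj => HasSum.mul_left _ ?_
    have hj' := Finset.mem_range.mp hj
    exact hasSum_lipschitzSum (by omega) x
  have hT := (hasSum_telescope hx d).mul_left
    ((-1) ^ t * (Nat.multichoose (s + 1) t : ℂ) * D ^ (s + 1 + t))
  have := (hA.add hB).add hT
  rw [mul_zero, add_zero] at this
  refine this.congr_fun fun n => ?_
  have ha : x + n + d ≠ 0 := by
    have := add_int_ne_zero hx (n + d)
    push_cast at this
    rwa [add_assoc]
  have hb := add_int_ne_zero hx n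
  have hpf := partialFrac (A := 1 / (x + n + d)) (B := 1 / (x + n)) (D := D)
    (by rw [hD]; field_simp; ring) (s + 1) (t + 1) (by simp)
  have hm : Nat.multichoose (t + 1) s = Nat.multichoose (s + 1) t := by
    rw [Nat.multichoose_eq, Nat.multichoose_eq,
      ← Nat.choose_symm_of_eq_add (show t + 1 + s - 1 = t + s by omega)]
    congr 1
    omega
  have : 1 / ((x + n + d) ^ (s + 1) * (x + n) ^ (t + 1)) =
      (1 / (x + n + d)) ^ (s + 1) * (1 / (x + n)) ^ (t + 1) := by
    rw [one_div_pow, one_div_pow, one_div_mul_one_div]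
  rw [this, hpf, Finset.sum_range_succ _ s, Finset.sum_range_succ _ t, hm]
  simp only [Nat.add_sub_cancel, Nat.add_sub_cancel_left, pow_one, one_div_pow]
  ring

/-! ### Lipschitz's formula and q-expansions -/

lemma qExp_mul (m : ℕ) (τ : ℂ) : qExp (m * τ) = qExp τ ^ m := by
  rw [qExp, qExp, ← Complex.exp_nat_mul]
  congr 1
  ring

lemma norm_qExp_lt_one {τ : ℂ} (hτ : 0 < τ.im) : ‖qExp τ‖ < 1 := by
  have := UpperHalfPlane.norm_exp_two_pi_I_lt_one ⟨τ, hτ⟩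
  simpa [qExp] using this

/-- The coefficient of `q^(v+1)` in the Lipschitz formula of weight `k`, up to the factor
`(-2πi)^k`. -/
noncomputable def qCoef (k v : ℕ) : ℂ := ((v + 1 : ℕ) : ℂ) ^ (k - 1) / ((k - 1).factorial : ℂ)

lemma summable_norm_qCoef (k : ℕ) {q : ℂ} (hq : ‖q‖ < 1) :
    Summable fun v : ℕ => ‖qCoef k v * q ^ (v + 1)‖ := by
  have h := summable_norm_pow_mul_geometric_of_norm_lt_one (k - 1) hq
  have h2 := ((summable_nat_add_iff 1).mpr h).mul_right (‖((k - 1).factorial : ℂ)‖⁻¹)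
  refine h2.congr fun v => ?_
  simp only [qCoef, norm_mul, norm_div]
  ring

/-- Lipschitz's formula. -/
lemma hasSum_lipschitz {k : ℕ} (hk : 2 ≤ k) {x : ℂ} (hx : 0 < x.im) :
    HasSum (fun v : ℕ => (-(2 * Real.pi * I)) ^ k * (qCoef k v * qExp x ^ (v + 1)))
      (lipschitzSum k x) := by
  have h := EisensteinSeries.qExpansion_identity (k := k - 1) (by omega) ⟨x, hx⟩
  have hq : ‖qExp x‖ < 1 := norm_qExp_lt_one hx
  have hs := (summable_norm_qCoef k hq).of_norm.hasSum
  have h1 := hs.mul_left ((-(2 * Real.pi * I)) ^ k : ℂ)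
  convert! h1 using 1
  rw [show k - 1 + 1 = k by omega] at h
  change lipschitzSum k x = _ at h
  rw [h]
  have h0 : Summable fun n : ℕ => (n : ℂ) ^ (k - 1) * qExp x ^ n :=
    (summable_norm_pow_mul_geometric_of_norm_lt_one (k - 1) hq).of_norm
  have e : ∑' n : ℕ, (n : ℂ) ^ (k - 1) * cexp (2 * Real.pi * I * x) ^ n =
      ∑' n : ℕ, ((n + 1 : ℕ) : ℂ) ^ (k - 1) * qExp x ^ (n + 1) := by
    change ∑' n : ℕ, (n : ℂ) ^ (k - 1) * qExp x ^ n = _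
    rw [h0.tsum_eq_zero_add]
    simp [show k - 1 ≠ 0 by omega]
  have e2 : ∑' v : ℕ, qCoef k v * qExp x ^ (v + 1) =
      ((k - 1).factorial : ℂ)⁻¹ * ∑' n : ℕ, ((n + 1 : ℕ) : ℂ) ^ (k - 1) * qExp x ^ (n + 1) := by
    rw [← tsum_mul_left]
    refine tsum_congr fun v => ?_
    rw [qCoef]
    ring
  rw [e2]
  change _ * ∑' n : ℕ, (n : ℂ) ^ (k - 1) * cexp (2 * Real.pi * I * x) ^ n = _
  rw [e]
  ring

lemma norm_pow_le_of_norm_lt_one {q : ℂ} (hq : ‖q‖ < 1) {a b : ℕ} (h : b ≤ a) :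
    ‖q ^ a‖ ≤ ‖q‖ ^ b := by
  rw [norm_pow]
  exact pow_le_pow_of_le_one (norm_nonneg _) hq.le h

lemma summable_gOne (k : ℕ) {q : ℂ} (hq : ‖q‖ < 1) :
    Summable fun uv : ℕ × ℕ => qCoef k uv.2 * q ^ ((uv.1 + 1) * (uv.2 + 1)) := by
  have hg : Summable fun u : ℕ => ‖q‖ ^ u :=
    summable_geometric_of_lt_one (norm_nonneg _) hq
  have h := hg.mul_of_nonneg (summable_norm_qCoef k hq)
    (fun _ => by positivity) (fun _ => by positivity)
  refine Summable.of_norm_bounded h fun uv => ?_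
  have := norm_pow_le_of_norm_lt_one hq
    (show uv.1 + (uv.2 + 1) ≤ (uv.1 + 1) * (uv.2 + 1) by nlinarith)
  rw [norm_mul, norm_mul, norm_pow q (uv.2 + 1)]
  calc _ ≤ ‖qCoef k uv.2‖ * ‖q‖ ^ (uv.1 + (uv.2 + 1)) := by gcongr
    _ = _ := by rw [pow_add]; ring

lemma im_nat_mul {τ : ℂ} (hτ : 0 < τ.im) {m : ℕ} (hm : m ≠ 0) : 0 < ((m : ℂ) * τ).im := by
  have : (0 : ℝ) < m := by exact_mod_cast Nat.pos_of_ne_zero hm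
  simpa using mul_pos this hτ

/-- Iterated form of `g_k = ∑_{m > 0} ∑_{n ∈ ℤ} 1/(mτ+n)^k`; for `k = 2` the double sum is only
conditionally convergent, so the order of summation matters. -/
lemma hasSum_gOne {k : ℕ} (hk : 2 ≤ k) {τ : ℂ} (hτ : 0 < τ.im) :
    HasSum (fun m : ℕ => lipschitzSum k (((m + 1 : ℕ) : ℂ) * τ)) (gOne k τ) := by
  have h := ((summable_gOne k (norm_qExp_lt_one hτ)).hasSum.mul_left
    ((-(2 * Real.pi * I)) ^ k : ℂ)).prod_fiberwise
      (g := fun m : ℕ => lipschitzSum k (((m + 1 : ℕ) : ℂ) * τ)) fun m => by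
        have := hasSum_lipschitz hk (im_nat_mul hτ (Nat.succ_ne_zero m))
        refine this.congr_fun fun v => ?_
        rw [qExp_mul, ← pow_mul]
  exact h

lemma summable_gTwo (s t : ℕ) {q : ℂ} (hq : ‖q‖ < 1) :
    Summable fun x : (ℕ × ℕ) × (ℕ × ℕ) => (qCoef s x.2.1 * qCoef t x.2.2) *
      q ^ ((x.1.1 + x.1.2 + 2) * (x.2.1 + 1) + (x.1.1 + 1) * (x.2.2 + 1)) := by
  have hg : Summable fun u : ℕ => ‖q‖ ^ u :=
    summable_geometric_of_lt_one (norm_nonneg _) hq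
  have h := (hg.mul_of_nonneg hg (fun _ => by positivity) (fun _ => by positivity)).mul_of_nonneg
    ((summable_norm_qCoef s hq).mul_of_nonneg (summable_norm_qCoef t hq)
    (fun _ => by positivity) (fun _ => by positivity)) (fun _ => by positivity)
    (fun _ => by positivity)
  refine Summable.of_norm_bounded h fun x => ?_
  have := norm_pow_le_of_norm_lt_one hq
    (show x.1.1 + x.1.2 + ((x.2.1 + 1) + (x.2.2 + 1)) ≤
      (x.1.1 + x.1.2 + 2) * (x.2.1 + 1) + (x.1.1 + 1) * (x.2.2 + 1) by nlinarith)
  simp only [norm_mul, norm_pow q (_ + 1)]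
  calc _ ≤ ‖qCoef s x.2.1‖ * ‖qCoef t x.2.2‖ *
        ‖q‖ ^ (x.1.1 + x.1.2 + ((x.2.1 + 1) + (x.2.2 + 1))) := by gcongr
    _ = _ := by simp only [pow_add]; ring

/-- Pairs `u₁ > u₂ > 0` are parametrised by `u₂ = b + 1`, `u₁ = a + b + 2`. -/
def gTwoEquiv : (ℕ × ℕ) × (ℕ × ℕ) ≃ {x : (ℕ × ℕ) × (ℕ × ℕ) // x.1.2 < x.1.1 ∧ 0 < x.1.2} where
  toFun x := ⟨((x.1.1 + x.1.2 + 2, x.1.1 + 1), x.2), by dsimp only; omega, by simp⟩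
  invFun y := ((y.1.1.2 - 1, y.1.1.1 - y.1.1.2 - 1), y.1.2)
  left_inv x := by
    ext <;> simp
    omega
  right_inv y := by
    obtain ⟨⟨⟨a, b⟩, v⟩, h1, h2⟩ := y
    simp only at h1 h2
    ext <;> simp <;> omega

lemma hasSum_mul_complex {ι κ : Type*} {f : ι → ℂ} {g : κ → ℂ} {a b : ℂ} (hf : HasSum f a)
    (hg : HasSum g b) : HasSum (fun x : ι × κ => f x.1 * g x.2) (a * b) :=
  hf.mul hg (summable_mul_of_summable_norm hf.summable.norm hg.summable.norm)

lemma hasSum_lipschitz_mul {s t : ℕ} (hs : 2 ≤ s) (ht : 2 ≤ t) {τ : ℂ} (hτ : 0 < τ.im)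
    {m n : ℕ} (hm : m ≠ 0) (hn : n ≠ 0) :
    HasSum (fun v : ℕ × ℕ => (-(2 * Real.pi * I)) ^ (s + t) * ((qCoef s v.1 * qCoef t v.2) *
      qExp τ ^ (m * (v.1 + 1) + n * (v.2 + 1))))
      (lipschitzSum s (m * τ) * lipschitzSum t (n * τ)) := by
  have h1 := hasSum_lipschitz hs (im_nat_mul hτ hm)
  have h2 := hasSum_lipschitz ht (im_nat_mul hτ hn)
  have h3 := hasSum_mul_complex h1 h2
  simp only [qExp_mul, ← pow_mul] at h3
  convert! h3 using 2 with v
  rw [pow_add, pow_add]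
  ring

/-- `gTwo` rewritten over the free parameters of `gTwoEquiv`. -/
lemma gTwo_eq (s t : ℕ) (τ : ℂ) : gTwo s t τ = (-(2 * Real.pi * I)) ^ (s + t) *
      ∑' x : (ℕ × ℕ) × (ℕ × ℕ), (qCoef s x.2.1 * qCoef t x.2.2) *
      qExp τ ^ ((x.1.1 + x.1.2 + 2) * (x.2.1 + 1) + (x.1.1 + 1) * (x.2.2 + 1)) := by
  rw [gTwo, ← gTwoEquiv.tsum_eq]
  congr 1
  refine tsum_congr fun x => ?_
  rw [qCoef, qCoef, div_mul_div_comm]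
  rfl

/-- `g_{s,t} = ∑_{u₁ > u₂ > 0} Ψ_s(u₁τ) Ψ_t(u₂τ)`, where `Ψ` is `lipschitzSum`. -/
lemma hasSum_gTwo {s t : ℕ} (hs : 2 ≤ s) (ht : 2 ≤ t) {τ : ℂ} (hτ : 0 < τ.im) :
    HasSum (fun x : ℕ × ℕ => lipschitzSum s (((x.1 + x.2 + 2 : ℕ) : ℂ) * τ) *
      lipschitzSum t (((x.1 + 1 : ℕ) : ℂ) * τ)) (gTwo s t τ) := by
  have h := (summable_gTwo s t (norm_qExp_lt_one hτ)).hasSum.mul_left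
    ((-(2 * Real.pi * I)) ^ (s + t) : ℂ)
  rw [← gTwo_eq] at h
  refine h.prod_fiberwise fun x => ?_
  have := hasSum_lipschitz_mul hs ht hτ (m := x.1 + x.2 + 2) (n := x.1 + 1)
    (by omega) (by omega)
  exact this

/-! ### Absolute convergence -/

/-- The weight `max(1,|n|)^(-5/4)`, summable over `ℤ`; the `max` keeps it nonzero at `n = 0`. -/
noncomputable def wt (n : ℤ) : ℝ := (max 1 |(n : ℝ)|) ^ (-(5 / 4 : ℝ))

lemma wt_nonneg (n : ℤ) : 0 ≤ wt n := by
  unfold wt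
  positivity

lemma summable_wt : Summable wt := by
  have h := (Real.summable_abs_int_rpow (b := 5 / 4) (by norm_num)).add
    (hasSum_ite_eq (0 : ℤ) (1 : ℝ)).summable
  refine Summable.of_nonneg_of_le wt_nonneg (fun n => ?_) h
  by_cases hn : n = 0
  · subst hn
    simp only [wt, Int.cast_zero, abs_zero, if_true]
    rw [max_eq_left zero_le_one, Real.one_rpow]
    linarith [Real.rpow_nonneg (le_refl (0 : ℝ)) (-(5 / 4))]
  · have : (1 : ℝ) ≤ |(n : ℝ)| := by exact_mod_cast Int.one_le_abs hn
    simp [wt, hn, max_eq_right this]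

/-- A nonzero lattice point `mτ + n` has modulus at least a constant times the larger coordinate. -/
lemma lattice_lower {τ : ℂ} (hτ : 0 < τ.im) : ∃ r : ℝ, 0 < r ∧ ∀ m n : ℤ, (m, n) ≠ 0 →
    r * max (max 1 |(m : ℝ)|) (max 1 |(n : ℝ)|) ≤ ‖(m : ℂ) * τ + n‖ := by
  refine ⟨EisensteinSeries.r ⟨τ, hτ⟩, EisensteinSeries.r_pos _, fun m n h => ?_⟩
  have hne : (![m, n] : Fin 2 → ℤ) ≠ 0 := by
    intro h0
    apply h
    have a := congrFun h0 0
    have b := congrFun h0 1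
    simp at a b
    simp [a, b]
  have := EisensteinSeries.r_mul_max_le ⟨τ, hτ⟩ hne
  rw [EisensteinSeries.norm_eq_max_natAbs] at this
  have e : max (max 1 |(m : ℝ)|) (max 1 |(n : ℝ)|) =
      ((max m.natAbs n.natAbs : ℕ) : ℝ) := by
    have h1 : 1 ≤ max m.natAbs n.natAbs := by
      by_contra hc
      apply h
      have : m = 0 := by omega
      have : n = 0 := by omega
      simp [*]
    have h1' : (1 : ℝ) ≤ max |(m : ℝ)| |(n : ℝ)| := by
      have : ((1 : ℕ) : ℝ) ≤ ((max m.natAbs n.natAbs : ℕ) : ℝ) := by exact_mod_cast h1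
      simpa [Nat.cast_natAbs] using this
    rw [max_max_max_comm, max_self, max_eq_right h1']
    simp [Nat.cast_natAbs]
  rw [e]
  simpa using this

/-- The exponents `7/4 + 5/4 = 3` and `3/4 + 5/4 = 2`, together with `b₁ ≤ a₁`, distribute the
decay evenly over all four coordinates. -/
lemma rpow_bound {X Y a₁ a₂ b₁ b₂ : ℝ} (ha : 1 ≤ a₁) (ha' : 1 ≤ a₂) (hb : 1 ≤ b₁) (hb' : 1 ≤ b₂)
    (hab : b₁ ≤ a₁) (h1 : a₁ ≤ X) (h2 : a₂ ≤ X) (h3 : b₁ ≤ Y) (h4 : b₂ ≤ Y) {s t : ℕ}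
    (hs : 3 ≤ s) (ht : 2 ≤ t) :
    a₁ ^ (5 / 4 : ℝ) * a₂ ^ (5 / 4 : ℝ) * (b₁ ^ (5 / 4 : ℝ) * b₂ ^ (5 / 4 : ℝ)) ≤
      X ^ s * Y ^ t := by
  have hX : 0 < X := by linarith
  have hY : 0 < Y := by linarith
  have e1 : a₁ ^ (5 / 4 : ℝ) * b₁ ^ (1 / 2 : ℝ) * a₂ ^ (5 / 4 : ℝ) ≤ X ^ s :=
    calc _ ≤ X ^ (5 / 4 : ℝ) * X ^ (1 / 2 : ℝ) * X ^ (5 / 4 : ℝ) := by gcongr; linarith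
      _ = X ^ 3 := by
        rw [← Real.rpow_add hX, ← Real.rpow_add hX, ← Real.rpow_natCast]
        norm_num
      _ ≤ X ^ s := pow_le_pow_right₀ (by linarith) hs
  have e2 : b₁ ^ (3 / 4 : ℝ) * b₂ ^ (5 / 4 : ℝ) ≤ Y ^ t :=
    calc _ ≤ Y ^ (3 / 4 : ℝ) * Y ^ (5 / 4 : ℝ) := by gcongr
      _ = Y ^ 2 := by
        rw [← Real.rpow_add hY, ← Real.rpow_natCast]
        norm_num
      _ ≤ Y ^ t := pow_le_pow_right₀ (by linarith) ht
  have e3 : b₁ ^ (5 / 4 : ℝ) = b₁ ^ (1 / 2 : ℝ) * b₁ ^ (3 / 4 : ℝ) := by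
    rw [← Real.rpow_add (by linarith)]
    norm_num
  calc _ = (a₁ ^ (5 / 4 : ℝ) * b₁ ^ (1 / 2 : ℝ) * a₂ ^ (5 / 4 : ℝ)) *
        (b₁ ^ (3 / 4 : ℝ) * b₂ ^ (5 / 4 : ℝ)) := by rw [e3]; ring
    _ ≤ _ := by gcongr

/-- Absolute convergence of the double Eisenstein series. The ordering `λ₁ ≻ λ₂ ≻ 0` enters only
through `0 ≤ m₂ ≤ m₁`, which lets the excess decay of `λ₁` compensate for the borderline exponent
`2` of `λ₂`. -/
lemma summable_G2 {s t : ℕ} (hs : 3 ≤ s) (ht : 2 ≤ t) {τ : ℂ} (hτ : 0 < τ.im) :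
    Summable fun x : {x : (ℤ × ℤ) × (ℤ × ℤ) // posLattice (x.1 - x.2) ∧ posLattice x.2} =>
      1 / (((x.1.1.1 : ℂ) * τ + (x.1.1.2 : ℂ)) ^ s * ((x.1.2.1 : ℂ) * τ + (x.1.2.2 : ℂ)) ^ t) := by
  obtain ⟨r, hr, hlow⟩ := lattice_lower hτ
  have h2 : Summable fun p : ℤ × ℤ => wt p.1 * wt p.2 :=
    summable_wt.mul_of_nonneg summable_wt wt_nonneg wt_nonneg
  have h2' : ∀ p : ℤ × ℤ, 0 ≤ wt p.1 * wt p.2 :=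
    fun p => mul_nonneg (wt_nonneg _) (wt_nonneg _)
  have h4 := ((h2.mul_of_nonneg h2 h2' h2').comp_injective
    (Subtype.val_injective (p := fun x : (ℤ × ℤ) × (ℤ × ℤ) =>
      posLattice (x.1 - x.2) ∧ posLattice x.2))).mul_left ((r ^ s * r ^ t)⁻¹)
  refine Summable.of_norm_bounded h4 fun x => ?_
  obtain ⟨⟨⟨m1, n1⟩, ⟨m2, n2⟩⟩, hx1, hx2⟩ := x
  simp only [posLattice, Prod.fst_sub, Prod.snd_sub] at hx1 hx2
  simp only [Function.comp, wt]
  have hl1 := hlow m1 n1 (by simp only [ne_eq, Prod.mk_eq_zero]; omega)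
  have hl2 := hlow m2 n2 (by simp only [ne_eq, Prod.mk_eq_zero]; omega)
  have hm : |(m2 : ℝ)| ≤ |(m1 : ℝ)| := by
    have : |m2| ≤ |m1| := by
      rw [abs_of_nonneg (by omega), abs_of_nonneg (by omega)]
      omega
    exact_mod_cast this
  have hb := rpow_bound (le_max_left 1 |(m1 : ℝ)|) (le_max_left 1 |(n1 : ℝ)|)
    (le_max_left 1 |(m2 : ℝ)|) (le_max_left 1 |(n2 : ℝ)|) (max_le_max le_rfl hm)
    (le_max_left _ _) (le_max_right _ _) (le_max_left _ _) (le_max_right _ _) hs ht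
  rw [norm_div, norm_one, norm_mul, norm_pow, norm_pow]
  have hp : ∀ n : ℤ, (0 : ℝ) < max 1 |(n : ℝ)| := fun n => lt_max_of_lt_left one_pos
  simp only [Real.rpow_neg (hp _).le, ← mul_inv]
  rw [one_div]
  have hpp : ∀ n : ℤ, (0 : ℝ) < (max 1 |(n : ℝ)|) ^ (5 / 4 : ℝ) :=
    fun n => Real.rpow_pos_of_pos (hp n) _
  refine inv_anti₀ ?_ ?_
  · have := hpp m1
    have := hpp m2
    have := hpp n1
    have := hpp n2
    positivity
  · refine (mul_le_mul_of_nonneg_left hb (by positivity)).trans ?_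
    rw [mul_mul_mul_comm, ← mul_pow, ← mul_pow]
    have := hp m1
    have := hp m2
    gcongr

/-! ### Decomposition of the double series -/

/-- The index type of the double Eisenstein series. -/
abbrev PosPair : Type := {x : (ℤ × ℤ) × (ℤ × ℤ) // posLattice (x.1 - x.2) ∧ posLattice x.2}

/-- The index type of the double zeta value. -/
abbrev ZetaPair : Type := {p : ℕ × ℕ // p.2 < p.1 ∧ 0 < p.2}

/-- The pairs of lattice points with `m₁ = m₂ = 0`. -/
def part₁ (p : ZetaPair) : PosPair :=
  ⟨((0, p.1.1), (0, p.1.2)), by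
    have := p.2
    simp only [posLattice, Prod.fst_sub, Prod.snd_sub, true_and]
    omega⟩

/-- The pairs with `m₁ > m₂ = 0`, parametrised by `(n₂ - 1, m₁ - 1, n₁)`. -/
def part₂ (p : ℕ × ℕ × ℤ) : PosPair :=
  ⟨((p.2.1 + 1, p.2.2), (0, p.1 + 1)), by
    simp only [posLattice, Prod.fst_sub, Prod.snd_sub, true_and]
    omega⟩

/-- The pairs with `m₁ = m₂ > 0`, parametrised by `(n₁ - n₂ - 1, m₁ - 1, n₂)`. -/
def part₃ (p : ℕ × ℕ × ℤ) : PosPair :=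
  ⟨((p.2.1 + 1, p.2.2 + (p.1 + 1)), (p.2.1 + 1, p.2.2)), by
    simp only [posLattice, Prod.fst_sub, Prod.snd_sub]
    omega⟩

/-- The pairs with `m₁ > m₂ > 0`, parametrised by `((m₂ - 1, m₁ - m₂ - 1), (n₁, n₂))`. -/
def part₄ (p : (ℕ × ℕ) × (ℤ × ℤ)) : PosPair :=
  ⟨((p.1.1 + p.1.2 + 2, p.2.1), (p.1.1 + 1, p.2.2)), by
    simp only [posLattice, Prod.fst_sub, Prod.snd_sub]
    omega⟩

/-- The four families partition the set of pairs `λ₁ ≻ λ₂ ≻ 0`. -/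
lemma parts_bijective :
    Function.Bijective (Sum.elim part₁ (Sum.elim part₂ (Sum.elim part₃ part₄))) := by
  constructor
  · rintro (⟨⟨a, b⟩, h⟩ | ⟨a, b, c⟩ | ⟨a, b, c⟩ | ⟨⟨a, b⟩, c, d⟩)
      (⟨⟨a', b'⟩, h'⟩ | ⟨a', b', c'⟩ | ⟨a', b', c'⟩ | ⟨⟨a', b'⟩, c', d'⟩) e <;>
    simp only [Sum.elim_inl, Sum.elim_inr, part₁, part₂, part₃, part₄, Subtype.mk.injEq,
      Prod.mk.injEq] at e <;>
    simp only [Sum.inl.injEq, Sum.inr.injEq, Subtype.mk.injEq, Prod.mk.injEq, reduceCtorEq] <;>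
    omega
  · rintro ⟨⟨⟨m1, n1⟩, m2, n2⟩, h⟩
    have h' := h
    simp only [posLattice, Prod.fst_sub, Prod.snd_sub] at h'
    by_cases hm2 : m2 = 0
    · by_cases hm1 : m1 = 0
      · refine ⟨.inl ⟨(n1.toNat, n2.toNat), by omega⟩, ?_⟩
        simp only [Sum.elim_inl, part₁, Subtype.mk.injEq, Prod.mk.injEq]
        omega
      · refine ⟨.inr (.inl ((n2 - 1).toNat, (m1 - 1).toNat, n1)), ?_⟩
        simp only [Sum.elim_inl, Sum.elim_inr, part₂, Subtype.mk.injEq, Prod.mk.injEq, and_true]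
        omega
    · by_cases hm : m1 = m2
      · refine ⟨.inr (.inr (.inl ((n1 - n2 - 1).toNat, (m1 - 1).toNat, n2))), ?_⟩
        simp only [Sum.elim_inl, Sum.elim_inr, part₃, Subtype.mk.injEq, Prod.mk.injEq, and_true]
        omega
      · refine ⟨.inr (.inr (.inr (((m2 - 1).toNat, (m1 - m2 - 1).toNat), (n1, n2)))), ?_⟩
        simp only [Sum.elim_inr, part₄, Subtype.mk.injEq, Prod.mk.injEq, and_true]
        omega

lemma tsum_parts {f : PosPair → ℂ} {a₁ a₂ a₃ a₄ : ℂ} (h₁ : HasSum (f ∘ part₁) a₁)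
    (h₂ : HasSum (f ∘ part₂) a₂) (h₃ : HasSum (f ∘ part₃) a₃) (h₄ : HasSum (f ∘ part₄) a₄) :
    ∑' x, f x = a₁ + (a₂ + (a₃ + a₄)) := by
  have h : HasSum (f ∘ Sum.elim part₁ (Sum.elim part₂ (Sum.elim part₃ part₄)))
      (a₁ + (a₂ + (a₃ + a₄))) := HasSum.sum h₁ (HasSum.sum h₂ (HasSum.sum h₃ h₄))
  exact ((Equiv.ofBijective _ parts_bijective).hasSum_iff.mp h).tsum_eq

/-- A summable family may be summed coordinate by coordinate, innermost integer first.
Only iterated sums are evaluated, so that `hasSum_gOne` applies even in weight `2`. -/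
lemma hasSum_of_iterated {f : ℕ × ℕ × ℤ → ℂ} (hf : Summable f) {g : ℕ → ℕ → ℂ} {h : ℕ → ℂ}
    {a : ℂ} (h₁ : ∀ d m, HasSum (fun n => f (d, m, n)) (g d m)) (h₂ : ∀ d, HasSum (g d) (h d))
    (h₃ : HasSum h a) : HasSum f a := by
  have hd : ∀ d, HasSum (fun p => f (d, p)) (h d) := fun d => by
    have hs := (hf.prod_factor d).hasSum
    rwa [(hs.prod_fiberwise (h₁ d)).unique (h₂ d)] at hs
  have hs := hf.hasSum
  rwa [(hs.prod_fiberwise hd).unique h₃] at hs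

lemma hasSum_rzeta {k : ℕ} (hk : 2 ≤ k) :
    HasSum (fun d : ℕ => (1 / ((d + 1 : ℕ) : ℂ)) ^ k) ((rzeta k : ℝ) : ℂ) := by
  have h := (summable_nat_add_iff 1).mpr (Real.summable_one_div_nat_pow.mpr (by omega : 1 < k))
  have h' : Summable fun n : ℕ => (1 : ℝ) / ((n : ℝ) + 1) ^ k := by simpa using h
  have := Complex.hasSum_ofReal.mpr h'.hasSum
  change HasSum _ ((rzeta k : ℝ) : ℂ) at this
  refine this.congr_fun fun d => ?_
  push_cast
  rw [one_div_pow]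

/-- The general term of the double Eisenstein series. -/
noncomputable def eisTerm (s t : ℕ) (τ : ℂ) (x : PosPair) : ℂ :=
  1 / (((x.1.1.1 : ℂ) * τ + (x.1.1.2 : ℂ)) ^ s * ((x.1.2.1 : ℂ) * τ + (x.1.2.2 : ℂ)) ^ t)

lemma hasSum_part₁ {s t : ℕ} {τ : ℂ} (hf : Summable (eisTerm s t τ)) :
    HasSum (eisTerm s t τ ∘ part₁) ((mzeta2 s t : ℝ) : ℂ) := by
  have hinj : Function.Injective part₁ :=
    parts_bijective.1.comp Sum.inl_injective
  have h := (hf.comp_injective hinj).hasSum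
  have e : ∑' p, (eisTerm s t τ ∘ part₁) p = ((mzeta2 s t : ℝ) : ℂ) := by
    rw [mzeta2, Complex.ofReal_tsum]
    refine tsum_congr fun p => ?_
    simp [eisTerm, part₁]
  rwa [e] at h

lemma hasSum_part₂ {s t : ℕ} (hs : 3 ≤ s) (ht : 2 ≤ t) {τ : ℂ} (hτ : 0 < τ.im)
    (hf : Summable (eisTerm s t τ)) :
    HasSum (eisTerm s t τ ∘ part₂) (((rzeta t : ℝ) : ℂ) * gOne s τ) := by
  have hinj : Function.Injective part₂ :=
    parts_bijective.1.comp (Sum.inr_injective.comp Sum.inl_injective)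
  refine hasSum_of_iterated (hf.comp_injective hinj)
    (g := fun d m => (1 / ((d + 1 : ℕ) : ℂ)) ^ t * lipschitzSum s (((m + 1 : ℕ) : ℂ) * τ))
    (h := fun d => (1 / ((d + 1 : ℕ) : ℂ)) ^ t * gOne s τ) (fun d m => ?_)
    (fun d => (hasSum_gOne (by omega) hτ).mul_left _) ((hasSum_rzeta ht).mul_right _)
  refine ((hasSum_lipschitzSum (k := s) (by omega) (((m + 1 : ℕ) : ℂ) * τ)).mul_left
    ((1 / ((d + 1 : ℕ) : ℂ)) ^ t)).congr_fun fun n => ?_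
  simp only [Function.comp, eisTerm, part₂]
  push_cast
  rw [zero_mul, zero_add, one_div_pow, one_div_mul_one_div, mul_comm]

lemma hasSum_part₃ {s t : ℕ} (hs : 3 ≤ s) (ht : 2 ≤ t) {τ : ℂ} (hτ : 0 < τ.im)
    (hf : Summable (eisTerm s t τ)) :
    HasSum (eisTerm s t τ ∘ part₃) (∑ k ∈ Finset.Icc 2 (s + t - 2),
      Ccoef k s t * ((rzeta k : ℝ) : ℂ) * gOne (s + t - k) τ) := by
  have hinj : Function.Injective part₃ :=
    parts_bijective.1.comp (Sum.inr_injective.comp (Sum.inr_injective.comp Sum.inl_injective))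
  refine hasSum_of_iterated (hf.comp_injective hinj)
    (g := fun d m => ∑ k ∈ Finset.Icc 2 (s + t - 2), Ccoef k s t *
      (1 / ((d + 1 : ℕ) : ℂ)) ^ k * lipschitzSum (s + t - k) (((m + 1 : ℕ) : ℂ) * τ))
    (h := fun d => ∑ k ∈ Finset.Icc 2 (s + t - 2), Ccoef k s t *
      (1 / ((d + 1 : ℕ) : ℂ)) ^ k * gOne (s + t - k) τ) (fun d m => ?_)
    (fun d => hasSum_sum fun k hk => ?_) (hasSum_sum fun k hk => ?_)
  · refine (hasSum_row (im_nat_mul hτ m.succ_ne_zero) s t (by omega) ht (d + 1)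
      d.succ_ne_zero).congr_fun fun n => ?_
    simp only [Function.comp, eisTerm, part₃]
    push_cast
    simp only [add_assoc]
  · rw [Finset.mem_Icc] at hk
    exact (hasSum_gOne (by omega) hτ).mul_left _
  · rw [Finset.mem_Icc] at hk
    exact ((hasSum_rzeta hk.1).mul_left _).mul_right _

lemma hasSum_part₄ {s t : ℕ} (hs : 3 ≤ s) (ht : 2 ≤ t) {τ : ℂ} (hτ : 0 < τ.im)
    (hf : Summable (eisTerm s t τ)) :
    HasSum (eisTerm s t τ ∘ part₄) (gTwo s t τ) := by
  have hinj : Function.Injective part₄ :=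
    parts_bijective.1.comp (Sum.inr_injective.comp (Sum.inr_injective.comp Sum.inr_injective))
  have h := (hf.comp_injective hinj).hasSum
  have h' := h.prod_fiberwise (g := fun x : ℕ × ℕ =>
      lipschitzSum s (((x.1 + x.2 + 2 : ℕ) : ℂ) * τ) *
      lipschitzSum t (((x.1 + 1 : ℕ) : ℂ) * τ)) fun x => by
    have := hasSum_mul_complex
      (hasSum_lipschitzSum (k := s) (by omega) (((x.1 + x.2 + 2 : ℕ) : ℂ) * τ))
      (hasSum_lipschitzSum (k := t) ht (((x.1 + 1 : ℕ) : ℂ) * τ))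
    refine this.congr_fun fun n => ?_
    simp only [Function.comp, eisTerm, part₄]
    push_cast
    rw [one_div_mul_one_div]
  rwa [h'.unique (hasSum_gTwo (by omega) ht hτ)] at h

/-- Fourier expansion of the double Eisenstein series: for `s₁ ≥ 3`, `s₂ ≥ 2` and `τ ∈ ℍ`,
`G_{s₁,s₂}(τ) = ζ(s₁,s₂) + ζ(s₂)·g_{s₁}(τ)
  + ∑_{k₁+k₂=s₁+s₂, k₁,k₂≥2} C^{k₂}_{s₁,s₂}·ζ(k₂)·g_{k₁}(τ) + g_{s₁,s₂}(τ)`,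
where the summation variable is `k₂ ∈ {2,…,s₁+s₂−2}` and `k₁ = s₁+s₂−k₂`. -/
theorem doubleEisenstein_fourier (s1 s2 : ℕ) (h1 : 3 ≤ s1) (h2 : 2 ≤ s2) (τ : ℂ)
    (hτ : 0 < τ.im) :
    G2 s1 s2 τ =
      ((mzeta2 s1 s2 : ℝ) : ℂ) + ((rzeta s2 : ℝ) : ℂ) * gOne s1 τ
      + (∑ k2 ∈ Finset.Icc 2 (s1 + s2 - 2),
          Ccoef k2 s1 s2 * ((rzeta k2 : ℝ) : ℂ) * gOne (s1 + s2 - k2) τ)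
      + gTwo s1 s2 τ := by
  have hf : Summable (eisTerm s1 s2 τ) := summable_G2 h1 h2 hτ
  have h := tsum_parts (hasSum_part₁ hf) (hasSum_part₂ h1 h2 hτ hf) (hasSum_part₃ h1 h2 hτ hf)
    (hasSum_part₄ h1 h2 hτ hf)
  change G2 s1 s2 τ = _ at h
  rw [h]
  ring
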